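/- Let Ψ be the rational cubic spline fractal interpolation function for the Hermite data {(x_i, y_i, d_i)} with scaling factors α_i (|α_i| ≤ κ a_i, 0 ≤ κ < 1) and shape parameters u_i > 0, v_i ≥ 0, and let C be the classical rational cubic spline obtained from the same data and shape parameters with all scaling factors zero. Then ‖C − Ψ‖_∞ ≤ (|α|_∞ / (s(1 − |α|_∞))) · { |u|_∞ M + (1/4)[(3|u|_∞ + |v|_∞) M + |u|_∞ (h |d|_∞ + (x_N − x_1) max{|d_1|, |d_N|})] }, where M = |y|_∞ + max{|y_1|, |y_N|}, |y|_∞ = max_i |y_i|, |d|_∞ = max_i |d_i|, |u|_∞ = max_i u_i, |v|_∞ = max_i v_i, |α|_∞ = max_i |α_i|, h = max_i h_i, and s = min_i (u_i + v_i/4). -/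

import Mathlib

/-!
On the `i`-th subinterval both functions are governed by the rational cubic Hermite piece with
shape parameters `u i`, `v i`, and this piece is linear in its Hermite data. With `r` the point
of `[x 1, x N]` that corresponds to `t` in `[x i, x (i + 1)]`, the functional equation therefore
collapses to `C t - Ψ t = α i * (B i r - Ψ r)`, where `B i` is the piece on all of `[x 1, x N]`
with the Hermite data of the two end knots. Hence `|C t - Ψ t| ≤ |α|∞ * (|C r - Ψ r| + |C r| +
|B i r|)`; taking the supremum and solving for it leaves only the uniform bound of one rational
cubic piece.
-/

open AffineMap Set

/-- The rational cubic Hermite piece on `[0, 1]` with shape parameters `u ≠ 0` and `v`: it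
takes the value `yl` with slope `ml` at `0` and the value `yr` with slope `mr` at `1`. The piece on
an interval of length `h` with end derivatives `dl`, `dr` has `ml = h * dl` and `mr = h * dr`. -/
def rationalCubic {𝕜 : Type*} [Field 𝕜] (u v yl yr ml mr θ : 𝕜) : 𝕜 :=
  (u * yl * (1 - θ) ^ 3 + ((3 * u + v) * yl + u * ml) * θ * (1 - θ) ^ 2
    + ((3 * u + v) * yr - u * mr) * θ ^ 2 * (1 - θ) + u * yr * θ ^ 3) / (u + v * θ * (1 - θ))

theorem rationalCubic_sub_mul {𝕜 : Type*} [Field 𝕜] (u v a yl yl' yr yr' ml ml' mr mr' θ : 𝕜) :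
    rationalCubic u v (yl - a * yl') (yr - a * yr') (ml - a * ml') (mr - a * mr') θ =
      rationalCubic u v yl yr ml mr θ - a * rationalCubic u v yl' yr' ml' mr' θ := by
  simp only [rationalCubic]
  ring

-- The two value weights are nonnegative on `[0, 1]` and add up to the denominator.
theorem rationalCubic_eq_values_add_slopes {𝕜 : Type*} [Field 𝕜] (u v yl yr ml mr θ : 𝕜) :
    rationalCubic u v yl yr ml mr θ =
      ((1 - θ) ^ 2 * (u + (2 * u + v) * θ) * yl + θ ^ 2 * (u + (2 * u + v) * (1 - θ)) * yr)
          / (u + v * (θ * (1 - θ)))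
        + u * (θ * (1 - θ)) / (u + v * (θ * (1 - θ))) * ((1 - θ) * ml + θ * -mr) := by
  rw [rationalCubic, mul_assoc v]
  ring

theorem lineMap_sub_div_sub {𝕜 : Type*} [Field 𝕜] {a b : 𝕜} (hab : a ≠ b) (θ : 𝕜) :
    (lineMap a b θ - a) / (b - a) = θ := by
  rw [lineMap_apply_ring', add_sub_cancel_right, mul_div_cancel_right₀ _ (sub_ne_zero.2 hab.symm)]

theorem sub_div_sub_mul_lineMap_add {𝕜 : Type*} [Field 𝕜] {a b : 𝕜} (hab : a ≠ b) (l r θ : 𝕜) :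
    (r - l) / (b - a) * lineMap a b θ + (b * l - a * r) / (b - a) = lineMap l r θ := by
  have : b - a ≠ 0 := sub_ne_zero.2 hab.symm
  rw [lineMap_apply_ring', lineMap_apply_ring']
  field_simp
  ring

theorem exists_mem_Icc_add_one {X : Type*} [LinearOrder X] {x : ℕ → X} {m n : ℕ} (hmn : m < n)
    {t : X} (ht : t ∈ Icc (x m) (x n)) : ∃ i ∈ Ico m n, t ∈ Icc (x i) (x (i + 1)) := by
  induction n, hmn using Nat.le_induction with
  | base => exact ⟨m, ⟨le_rfl, m.lt_succ_self⟩, ht⟩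
  | succ n hmn ih =>
    rcases le_total t (x n) with htn | hnt
    · obtain ⟨i, hi, hti⟩ := ih ⟨ht.1, htn⟩
      exact ⟨i, ⟨hi.1, hi.2.trans n.lt_succ_self⟩, hti⟩
    · exact ⟨n, ⟨(Nat.lt_of_succ_le hmn).le, n.lt_succ_self⟩, hnt, ht.2⟩

section OrderedField

variable {𝕜 : Type*} [Field 𝕜] [LinearOrder 𝕜] [IsStrictOrderedRing 𝕜]

theorem abs_mul_add_mul_le {p q a b B : 𝕜} (hp : 0 ≤ p) (hq : 0 ≤ q) (ha : |a| ≤ B)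
    (hb : |b| ≤ B) : |p * a + q * b| ≤ (p + q) * B :=
  calc |p * a + q * b| ≤ |p * a| + |q * b| := abs_add_le _ _
    _ = p * |a| + q * |b| := by rw [abs_mul, abs_mul, abs_of_nonneg hp, abs_of_nonneg hq]
    _ ≤ p * B + q * B := by gcongr
    _ = (p + q) * B := by ring

theorem mul_div_add_mul_le_div {u v w : 𝕜} (hu : 0 < u) (hv : 0 ≤ v) (hw0 : 0 ≤ w)
    (hw : w ≤ 1 / 4) : u * w / (u + v * w) ≤ u / (4 * u + v) := by
  rw [div_le_div_iff₀ (by positivity) (by positivity)]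
  calc u * w * (4 * u + v) = u * (4 * w * u + v * w) := by ring
    _ ≤ u * (1 * u + v * w) := by gcongr; linarith
    _ = u * (u + v * w) := by ring

theorem abs_rationalCubic_le {u v yl yr ml mr θ Y T : 𝕜} (hu : 0 < u) (hv : 0 ≤ v)
    (hθ : θ ∈ Icc (0 : 𝕜) 1) (hyl : |yl| ≤ Y) (hyr : |yr| ≤ Y) (hml : |ml| ≤ T) (hmr : |mr| ≤ T) :
    |rationalCubic u v yl yr ml mr θ| ≤ Y + u / (4 * u + v) * T := by
  have hθ0 : 0 ≤ θ := hθ.1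
  have hθ1 : 0 ≤ 1 - θ := sub_nonneg.2 hθ.2
  have hw0 : 0 ≤ θ * (1 - θ) := by positivity
  have hw : θ * (1 - θ) ≤ 1 / 4 := by linarith [sq_nonneg (θ - 1 / 2)]
  have : 0 ≤ T := (abs_nonneg _).trans hml
  have hden : 0 < u + v * (θ * (1 - θ)) := by positivity
  have hvalues := abs_mul_add_mul_le (p := (1 - θ) ^ 2 * (u + (2 * u + v) * θ))
    (q := θ ^ 2 * (u + (2 * u + v) * (1 - θ))) (by positivity) (by positivity) hyl hyr
  have hslopes := abs_mul_add_mul_le hθ1 hθ0 hml ((abs_neg mr).trans_le hmr)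
  rw [rationalCubic_eq_values_add_slopes]
  refine (abs_add_le _ _).trans (add_le_add ?_ ?_)
  · rw [abs_div, abs_of_pos hden, div_le_iff₀ hden]
    exact hvalues.trans_eq (by ring)
  · rw [abs_mul, abs_of_nonneg (by positivity)]
    calc u * (θ * (1 - θ)) / (u + v * (θ * (1 - θ))) * |(1 - θ) * ml + θ * -mr|
        ≤ u / (4 * u + v) * ((1 - θ + θ) * T) :=
          mul_le_mul (mul_div_add_mul_le_div hu hv hw0 hw) hslopes (abs_nonneg _) (by positivity)
      _ = u / (4 * u + v) * T := by ring

theorem abs_rationalCubic_mul_le {u v yl yr h dl dr θ β Y H D : 𝕜} (hu : 0 < u) (hv : 0 ≤ v)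
    (hβ : u / (4 * u + v) ≤ β) (hθ : θ ∈ Icc (0 : 𝕜) 1) (hyl : |yl| ≤ Y) (hyr : |yr| ≤ Y)
    (hh : 0 ≤ h) (hH : h ≤ H) (hdl : |dl| ≤ D) (hdr : |dr| ≤ D) :
    |rationalCubic u v yl yr (h * dl) (h * dr) θ| ≤ Y + β * (H * D) := by
  have hD : 0 ≤ D := (abs_nonneg _).trans hdl
  have hβ0 : 0 ≤ β := le_trans (by positivity) hβ
  have hslope : ∀ m, |m| ≤ D → |h * m| ≤ h * D := fun m hm ↦ by
    rw [abs_mul, abs_of_nonneg hh]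
    gcongr
  calc |rationalCubic u v yl yr (h * dl) (h * dr) θ|
      ≤ Y + u / (4 * u + v) * (h * D) :=
        abs_rationalCubic_le hu hv hθ hyl hyr (hslope dl hdl) (hslope dr hdr)
    _ ≤ Y + β * (H * D) := by gcongr

theorem lineMap_mem_Icc {a b θ : 𝕜} (hab : a ≤ b) (hθ : θ ∈ Icc (0 : 𝕜) 1) :
    lineMap a b θ ∈ Icc a b := by
  rw [← segment_eq_Icc hab]
  exact lineMap_mem_segment 𝕜 a b hθ

theorem exists_lineMap_eq_of_mem_Icc {x : ℕ → 𝕜} {m n : ℕ} (hmn : m < n) {t : 𝕜}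
    (ht : t ∈ Icc (x m) (x n)) :
    ∃ i ∈ Ico m n, ∃ θ ∈ Icc (0 : 𝕜) 1, lineMap (x i) (x (i + 1)) θ = t := by
  obtain ⟨i, hi, hti⟩ := exists_mem_Icc_add_one hmn ht
  rw [← segment_eq_Icc (hti.1.trans hti.2), segment_eq_image_lineMap] at hti
  exact ⟨i, hi, hti⟩

theorem sub_div_sub_le_one_of_monotoneOn {x : ℕ → 𝕜} {m n i : ℕ} (hx : MonotoneOn x (Icc m n))
    (hi : i ∈ Ico m n) : (x (i + 1) - x i) / (x n - x m) ≤ 1 := by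
  obtain ⟨hmi, hin⟩ := hi
  have hleft : x m ≤ x i := hx ⟨le_rfl, by lia⟩ ⟨hmi, hin.le⟩ hmi
  have hright : x (i + 1) ≤ x n := hx ⟨by lia, hin⟩ ⟨by lia, le_rfl⟩ hin
  have hlen : x m ≤ x n := hx ⟨le_rfl, by lia⟩ ⟨by lia, le_rfl⟩ (by lia)
  exact div_le_one_of_le₀ (by linarith) (sub_nonneg.2 hlen)

theorem mul_add_div_one_sub_le {A M S T U V : 𝕜} (hA0 : 0 ≤ A) (hA1 : A < 1) (hM : 0 ≤ M)
    (hU : 0 ≤ U) (hS : 0 < S) (hSUV : S ≤ U + V / 4) :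
    A * (M + U / (4 * S) * T) / (1 - A) ≤
      A / (S * (1 - A)) * (U * M + 1 / 4 * ((3 * U + V) * M + U * T)) := by
  have : 0 < 1 - A := sub_pos.2 hA1
  calc A * (M + U / (4 * S) * T) / (1 - A) = A / (S * (1 - A)) * (S * M + 1 / 4 * (U * T)) := by
        field_simp
    _ ≤ A / (S * (1 - A)) * (U * M + 1 / 4 * ((3 * U + V) * M + U * T)) := by
        gcongr ?_ * ?_
        linarith [mul_le_mul_of_nonneg_right hSUV hM, mul_nonneg hU hM]

end OrderedField

theorem le_mul_div_one_sub_of_forall_exists_le {X : Type*} {s : Set X} {f : X → ℝ} {A K : ℝ}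
    (hf : BddAbove (f '' s)) (hA0 : 0 ≤ A) (hA1 : A < 1)
    (h : ∀ t ∈ s, ∃ r ∈ s, f t ≤ A * (f r + K)) {t : X} (ht : t ∈ s) :
    f t ≤ A * K / (1 - A) := by
  have hle : ∀ r ∈ s, f r ≤ sSup (f '' s) := fun r hr ↦ le_csSup hf (mem_image_of_mem f hr)
  have hsup : sSup (f '' s) ≤ A * (sSup (f '' s) + K) := by
    refine csSup_le ⟨_, mem_image_of_mem f ht⟩ (forall_mem_image.2 fun t ht ↦ ?_)
    obtain ⟨r, hr, htr⟩ := h t ht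
    exact htr.trans (by gcongr; exact hle r hr)
  refine (hle t ht).trans ?_
  rw [le_div_iff₀ (sub_pos.2 hA1)]
  linarith

/-- The functional equation of the rational cubic spline fractal interpolation function with
Hermite data `(x i, y i, d i)`, `1 ≤ i ≤ N`, scaling factors `α` and shape parameters `u`, `v`,
which has at most one bounded solution on `[x 1, x N]` when all `|α i| < 1`. The affine map `L i`
from `[x 1, x N]` onto `[x i, x (i + 1)]` is encoded by the common parameter `θ` of the two
intervals; the classical rational cubic spline is the case `α = 0`. -/
def IsRationalCubicFIF (N : ℕ) (x y d α u v : ℕ → ℝ) (Ψ : ℝ → ℝ) : Prop :=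
  ∀ i ∈ Ico 1 N, ∀ θ ∈ Icc (0 : ℝ) 1,
    Ψ (lineMap (x i) (x (i + 1)) θ) = α i * Ψ (lineMap (x 1) (x N) θ) +
      rationalCubic (u i) (v i) (y i - α i * y 1) (y (i + 1) - α i * y N)
        ((x (i + 1) - x i) * d i - α i * ((x N - x 1) * d 1))
        ((x (i + 1) - x i) * d (i + 1) - α i * ((x N - x 1) * d N)) θ

namespace IsRationalCubicFIF

variable {N : ℕ} {x y d α u v : ℕ → ℝ} {Ψ C : ℝ → ℝ}

theorem of_forall_mem_Icc (hx : x 1 < x N)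
    (hΨ : ∀ i ∈ Ico 1 N, ∀ t ∈ Icc (x 1) (x N),
      Ψ ((x (i + 1) - x i) / (x N - x 1) * t + (x N * x i - x 1 * x (i + 1)) / (x N - x 1)) =
        α i * Ψ t + rationalCubic (u i) (v i) (y i - α i * y 1) (y (i + 1) - α i * y N)
          ((x (i + 1) - x i) * d i - α i * ((x N - x 1) * d 1))
          ((x (i + 1) - x i) * d (i + 1) - α i * ((x N - x 1) * d N))
          ((t - x 1) / (x N - x 1))) :
    IsRationalCubicFIF N x y d α u v Ψ := by
  intro i hi θ hθ
  have h := hΨ i hi _ (lineMap_mem_Icc hx.le hθ)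
  rwa [sub_div_sub_mul_lineMap_add hx.ne, lineMap_sub_div_sub hx.ne] at h

theorem classical_iff :
    IsRationalCubicFIF N x y d 0 u v C ↔ ∀ i ∈ Ico 1 N, ∀ θ ∈ Icc (0 : ℝ) 1,
      C (lineMap (x i) (x (i + 1)) θ) = rationalCubic (u i) (v i) (y i) (y (i + 1))
        ((x (i + 1) - x i) * d i) ((x (i + 1) - x i) * d (i + 1)) θ := by
  simp only [IsRationalCubicFIF, Pi.zero_apply, zero_mul, zero_add, sub_zero]

theorem classical_of_forall_mem_Icc (hx : ∀ i ∈ Ico 1 N, x i < x (i + 1))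
    (hC : ∀ i ∈ Ico 1 N, ∀ t ∈ Icc (x i) (x (i + 1)),
      C t = rationalCubic (u i) (v i) (y i) (y (i + 1)) ((x (i + 1) - x i) * d i)
        ((x (i + 1) - x i) * d (i + 1)) ((t - x i) / (x (i + 1) - x i))) :
    IsRationalCubicFIF N x y d 0 u v C := by
  refine classical_iff.2 fun i hi θ hθ ↦ ?_
  rw [hC i hi _ (lineMap_mem_Icc (hx i hi).le hθ), lineMap_sub_div_sub (hx i hi).ne]

theorem classical_sub_apply_lineMap (hC : IsRationalCubicFIF N x y d 0 u v C)
    (hΨ : IsRationalCubicFIF N x y d α u v Ψ) {i : ℕ} (hi : i ∈ Ico 1 N)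
    {θ : ℝ} (hθ : θ ∈ Icc (0 : ℝ) 1) :
    C (lineMap (x i) (x (i + 1)) θ) - Ψ (lineMap (x i) (x (i + 1)) θ) =
      α i * (rationalCubic (u i) (v i) (y 1) (y N) ((x N - x 1) * d 1) ((x N - x 1) * d N) θ
        - Ψ (lineMap (x 1) (x N) θ)) := by
  rw [classical_iff.1 hC i hi θ hθ, hΨ i hi θ hθ, rationalCubic_sub_mul]
  ring

variable {β Y D H : ℝ}

theorem abs_classical_le (hC : IsRationalCubicFIF N x y d 0 u v C) (hN : 1 < N)
    (hx : MonotoneOn x (Icc 1 N)) (hu : ∀ i ∈ Ico 1 N, 0 < u i) (hv : ∀ i ∈ Ico 1 N, 0 ≤ v i)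
    (hβ : ∀ i ∈ Ico 1 N, u i / (4 * u i + v i) ≤ β) (hY : ∀ i ∈ Icc 1 N, |y i| ≤ Y)
    (hD : ∀ i ∈ Icc 1 N, |d i| ≤ D) (hH : ∀ i ∈ Ico 1 N, x (i + 1) - x i ≤ H)
    {t : ℝ} (ht : t ∈ Icc (x 1) (x N)) : |C t| ≤ Y + β * (H * D) := by
  obtain ⟨i, hi, θ, hθ, rfl⟩ := exists_lineMap_eq_of_mem_Icc hN ht
  have hil : i ∈ Icc 1 N := ⟨hi.1, hi.2.le⟩
  have hir : i + 1 ∈ Icc 1 N := ⟨i.succ_pos, hi.2⟩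
  rw [classical_iff.1 hC i hi θ hθ]
  exact abs_rationalCubic_mul_le (hu i hi) (hv i hi) (hβ i hi) hθ (hY i hil) (hY _ hir)
    (sub_nonneg.2 (hx hil hir i.le_succ)) (hH i hi) (hD i hil) (hD _ hir)

theorem abs_classical_sub_le (hC : IsRationalCubicFIF N x y d 0 u v C)
    (hΨ : IsRationalCubicFIF N x y d α u v Ψ) (hΨb : Bornology.IsBounded (Ψ '' Icc (x 1) (x N)))
    (hN : 1 < N) (hx : MonotoneOn x (Icc 1 N)) {A : ℝ} (hα : ∀ i ∈ Ico 1 N, |α i| ≤ A) (hA : A < 1)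
    (hu : ∀ i ∈ Ico 1 N, 0 < u i) (hv : ∀ i ∈ Ico 1 N, 0 ≤ v i)
    (hβ : ∀ i ∈ Ico 1 N, u i / (4 * u i + v i) ≤ β) (hY : ∀ i ∈ Icc 1 N, |y i| ≤ Y)
    (hD : ∀ i ∈ Icc 1 N, |d i| ≤ D) (hH : ∀ i ∈ Ico 1 N, x (i + 1) - x i ≤ H)
    {t : ℝ} (ht : t ∈ Icc (x 1) (x N)) :
    |C t - Ψ t| ≤ A * (Y + max |y 1| |y N| + β * (H * D + (x N - x 1) * max |d 1| |d N|))
      / (1 - A) := by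
  have hlen : x 1 ≤ x N := hx ⟨le_rfl, hN.le⟩ ⟨hN.le, le_rfl⟩ hN.le
  have hCle : ∀ t ∈ Icc (x 1) (x N), |C t| ≤ Y + β * (H * D) := fun t ht ↦
    hC.abs_classical_le hN hx hu hv hβ hY hD hH ht
  have hA0 : 0 ≤ A := (abs_nonneg _).trans (hα 1 ⟨le_rfl, hN⟩)
  have hbdd : BddAbove ((fun t ↦ |C t - Ψ t|) '' Icc (x 1) (x N)) := by
    obtain ⟨P, hP⟩ := hΨb.exists_norm_le
    refine ⟨Y + β * (H * D) + P, forall_mem_image.2 fun t ht ↦ ?_⟩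
    exact (abs_sub _ _).trans (add_le_add (hCle t ht) (hP _ (mem_image_of_mem Ψ ht)))
  refine le_mul_div_one_sub_of_forall_exists_le hbdd hA0 hA (fun t ht ↦ ?_) ht
  obtain ⟨i, hi, θ, hθ, rfl⟩ := exists_lineMap_eq_of_mem_Icc hN ht
  set r := lineMap (x 1) (x N) θ
  have hr : r ∈ Icc (x 1) (x N) := lineMap_mem_Icc hlen hθ
  set b := rationalCubic (u i) (v i) (y 1) (y N) ((x N - x 1) * d 1) ((x N - x 1) * d N) θ
  have hb : |b| ≤ max |y 1| |y N| + β * ((x N - x 1) * max |d 1| |d N|) :=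
    abs_rationalCubic_mul_le (hu i hi) (hv i hi) (hβ i hi) hθ (le_max_left _ _) (le_max_right _ _)
      (sub_nonneg.2 hlen) le_rfl (le_max_left _ _) (le_max_right _ _)
  refine ⟨r, hr, ?_⟩
  rw [hC.classical_sub_apply_lineMap hΨ hi hθ, abs_mul]
  refine mul_le_mul (hα i hi) ?_ (abs_nonneg _) hA0
  calc |b - Ψ r| = |b + (C r - Ψ r) - C r| := by congr 1; ring
    _ ≤ |b| + |C r - Ψ r| + |C r| := (abs_sub _ _).trans (by gcongr; exact abs_add_le _ _)
    _ ≤ _ := by linarith [hCle r hr]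

end IsRationalCubicFIF

theorem stmt_13_general {N : ℕ} {x y d α u v : ℕ → ℝ} {Ψ C : ℝ → ℝ} (hN : 1 < N)
    (hx : MonotoneOn x (Icc 1 N)) (hα : ∀ i ∈ Ico 1 N, |α i| < 1)
    (hu : ∀ i ∈ Ico 1 N, 0 < u i) (hv : ∀ i ∈ Ico 1 N, 0 ≤ v i)
    (hΨ : IsRationalCubicFIF N x y d α u v Ψ) (hΨb : Bornology.IsBounded (Ψ '' Icc (x 1) (x N)))
    (hC : IsRationalCubicFIF N x y d 0 u v C) {Ynorm Dnorm Unorm Vnorm Anorm H S : ℝ}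
    (hYn : IsGreatest {z | ∃ i, 1 ≤ i ∧ i ≤ N ∧ z = |y i|} Ynorm)
    (hDn : IsGreatest {z | ∃ i, 1 ≤ i ∧ i ≤ N ∧ z = |d i|} Dnorm)
    (hUn : IsGreatest {z | ∃ i, 1 ≤ i ∧ i < N ∧ z = u i} Unorm)
    (hVn : IsGreatest {z | ∃ i, 1 ≤ i ∧ i < N ∧ z = v i} Vnorm)
    (hAn : IsGreatest {z | ∃ i, 1 ≤ i ∧ i < N ∧ z = |α i|} Anorm)
    (hH : IsGreatest {z | ∃ i, 1 ≤ i ∧ i < N ∧ z = x (i + 1) - x i} H)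
    (hS : IsLeast {z | ∃ i, 1 ≤ i ∧ i < N ∧ z = u i + v i / 4} S) :
    ∀ t ∈ Icc (x 1) (x N),
      |C t - Ψ t| ≤ Anorm / (S * (1 - Anorm)) *
        (Unorm * (Ynorm + max |y 1| |y N|)
          + 1 / 4 * ((3 * Unorm + Vnorm) * (Ynorm + max |y 1| |y N|)
            + Unorm * (H * Dnorm + (x N - x 1) * max |d 1| |d N|))) := by
  have hUi : ∀ i ∈ Ico 1 N, u i ≤ Unorm := fun i hi ↦ hUn.2 ⟨i, hi.1, hi.2, rfl⟩
  have hVi : ∀ i ∈ Ico 1 N, v i ≤ Vnorm := fun i hi ↦ hVn.2 ⟨i, hi.1, hi.2, rfl⟩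
  have hSi : ∀ i ∈ Ico 1 N, S ≤ u i + v i / 4 := fun i hi ↦ hS.2 ⟨i, hi.1, hi.2, rfl⟩
  have hAi : ∀ i ∈ Ico 1 N, |α i| ≤ Anorm := fun i hi ↦ hAn.2 ⟨i, hi.1, hi.2, rfl⟩
  have hYi : ∀ i ∈ Icc 1 N, |y i| ≤ Ynorm := fun i hi ↦ hYn.2 ⟨i, hi.1, hi.2, rfl⟩
  have hone : 1 ∈ Ico 1 N := ⟨le_rfl, hN⟩
  have hA0 : 0 ≤ Anorm := (abs_nonneg _).trans (hAi 1 hone)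
  have hU0 : 0 ≤ Unorm := (hu 1 hone).le.trans (hUi 1 hone)
  have hM0 : 0 ≤ Ynorm + max |y 1| |y N| :=
    add_nonneg ((abs_nonneg _).trans (hYi 1 ⟨le_rfl, hN.le⟩))
      ((abs_nonneg _).trans (le_max_left _ _))
  have hA1 : Anorm < 1 := by
    obtain ⟨i, hi1, hiN, rfl⟩ := hAn.1
    exact hα i ⟨hi1, hiN⟩
  have hS0 : 0 < S := by
    obtain ⟨i, hi1, hiN, rfl⟩ := hS.1
    linarith [hu i ⟨hi1, hiN⟩, hv i ⟨hi1, hiN⟩]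
  have hβ : ∀ i ∈ Ico 1 N, u i / (4 * u i + v i) ≤ Unorm / (4 * S) := fun i hi ↦
    div_le_div₀ hU0 (hUi i hi) (by positivity) (by linarith [hSi i hi])
  exact fun t ht ↦ (hC.abs_classical_sub_le hΨ hΨb hN hx hAi hA1 hu hv hβ hYi
    (fun i hi ↦ hDn.2 ⟨i, hi.1, hi.2, rfl⟩) (fun i hi ↦ hH.2 ⟨i, hi.1, hi.2, rfl⟩) ht).trans
    (mul_add_div_one_sub_le hA0 hA1 hM0 hU0 hS0 (by linarith [hUi 1 hone, hVi 1 hone, hSi 1 hone]))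

/-- Uniform bound for the distance between the RCSFIF `Ψ` and the
classical rational cubic spline `C` obtained with zero scaling factors. -/
theorem stmt_13
    (N : ℕ) (hN : 2 < N)
    (x y d : ℕ → ℝ)
    (hx : ∀ i, 1 ≤ i → i < N → x i < x (i + 1))
    (a : ℕ → ℝ) (ha : ∀ i, a i = (x (i + 1) - x i) / (x N - x 1))
    (L : ℕ → ℝ → ℝ)
    (hL : ∀ i, 1 ≤ i → i < N → ∀ t : ℝ, L i t =
      a i * t + (x N * x i - x 1 * x (i + 1)) / (x N - x 1))
    (α u v : ℕ → ℝ) (κ : ℝ)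
    (hκ0 : 0 ≤ κ) (hκ1 : κ < 1)
    (hα : ∀ i, 1 ≤ i → i < N → |α i| ≤ κ * a i)
    (hu : ∀ i, 1 ≤ i → i < N → 0 < u i)
    (hv : ∀ i, 1 ≤ i → i < N → 0 ≤ v i)
    (U V W Z : ℕ → ℝ)
    (hU : ∀ i, U i = u i * (y i - α i * y 1))
    (hV : ∀ i, V i = (3 * u i + v i) * (y i - α i * y 1)
      + u i * (x (i + 1) - x i) * d i - α i * u i * (x N - x 1) * d 1)
    (hW : ∀ i, W i = (3 * u i + v i) * (y (i + 1) - α i * y N)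
      - u i * (x (i + 1) - x i) * d (i + 1) + α i * u i * (x N - x 1) * d N)
    (hZ : ∀ i, Z i = u i * (y (i + 1) - α i * y N))
    (q : ℕ → ℝ → ℝ)
    (hq : ∀ (i : ℕ) (t θ : ℝ), θ = (t - x 1) / (x N - x 1) →
      q i t = (U i * (1 - θ) ^ 3 + V i * θ * (1 - θ) ^ 2
        + W i * θ ^ 2 * (1 - θ) + Z i * θ ^ 3) / (u i + v i * θ * (1 - θ)))
    (Ψ : ℝ → ℝ)
    (hΨc : ContinuousOn Ψ (Set.Icc (x 1) (x N)))
    (hΨ : ∀ i, 1 ≤ i → i < N → ∀ t ∈ Set.Icc (x 1) (x N),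
      Ψ (L i t) = α i * Ψ t + q i t)
    (C : ℝ → ℝ)
    (hC : ∀ (i : ℕ), 1 ≤ i → i < N → ∀ t ∈ Set.Icc (x i) (x (i + 1)),
      ∀ υ : ℝ, υ = (t - x i) / (x (i + 1) - x i) →
      C t = (u i * y i * (1 - υ) ^ 3
        + ((3 * u i + v i) * y i + u i * (x (i + 1) - x i) * d i) * υ * (1 - υ) ^ 2
        + ((3 * u i + v i) * y (i + 1)
            - u i * (x (i + 1) - x i) * d (i + 1)) * υ ^ 2 * (1 - υ)
        + u i * y (i + 1) * υ ^ 3) / (u i + v i * υ * (1 - υ)))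
    (Ynorm Dnorm Unorm Vnorm Anorm H S M : ℝ)
    (hYn : IsGreatest {z : ℝ | ∃ i, 1 ≤ i ∧ i ≤ N ∧ z = |y i|} Ynorm)
    (hDn : IsGreatest {z : ℝ | ∃ i, 1 ≤ i ∧ i ≤ N ∧ z = |d i|} Dnorm)
    (hUn : IsGreatest {z : ℝ | ∃ i, 1 ≤ i ∧ i < N ∧ z = u i} Unorm)
    (hVn : IsGreatest {z : ℝ | ∃ i, 1 ≤ i ∧ i < N ∧ z = v i} Vnorm)
    (hAn : IsGreatest {z : ℝ | ∃ i, 1 ≤ i ∧ i < N ∧ z = |α i|} Anorm)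
    (hH : IsGreatest {z : ℝ | ∃ i, 1 ≤ i ∧ i < N ∧ z = x (i + 1) - x i} H)
    (hS : IsLeast {z : ℝ | ∃ i, 1 ≤ i ∧ i < N ∧ z = u i + v i / 4} S)
    (hM : M = Ynorm + max |y 1| |y N|) :
    ∀ t ∈ Set.Icc (x 1) (x N),
      |C t - Ψ t| ≤ (Anorm / (S * (1 - Anorm))) *
        (Unorm * M + (1 / 4) * ((3 * Unorm + Vnorm) * M
          + Unorm * (H * Dnorm + (x N - x 1) * max |d 1| |d N|))) := by
  have hmono : StrictMonoOn x (Icc 1 N) :=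
    strictMonoOn_of_lt_add_one ordConnected_Icc fun i _ hi hi' ↦ hx i hi.1 hi'.2
  have hlen : x 1 < x N := hmono ⟨le_rfl, by lia⟩ ⟨by lia, le_rfl⟩ (by lia)
  have hα1 : ∀ i ∈ Ico 1 N, |α i| < 1 := fun i hi ↦
    calc |α i| ≤ κ * a i := hα i hi.1 hi.2
      _ ≤ κ := mul_le_of_le_one_right hκ0
        ((ha i).trans_le (sub_div_sub_le_one_of_monotoneOn hmono.monotoneOn hi))
      _ < 1 := hκ1
  have hΨ_fif : IsRationalCubicFIF N x y d α u v Ψ :=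
    .of_forall_mem_Icc hlen fun i hi t ht ↦ by
      rw [← ha, ← hL i hi.1 hi.2, hΨ i hi.1 hi.2 t ht, hq i t _ rfl, hU, hV, hW, hZ, rationalCubic]
      ring
  have hC_fif : IsRationalCubicFIF N x y d 0 u v C :=
    .classical_of_forall_mem_Icc (fun i hi ↦ hx i hi.1 hi.2) fun i hi t ht ↦ by
      rw [hC i hi.1 hi.2 t ht _ rfl, rationalCubic]
      ring
  rw [hM]
  exact stmt_13_general (by lia) hmono.monotoneOn hα1 (fun i hi ↦ hu i hi.1 hi.2)
    (fun i hi ↦ hv i hi.1 hi.2) hΨ_fif (isCompact_Icc.image_of_continuousOn hΨc).isBounded hC_fif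
    hYn hDn hUn hVn hAn hH hS
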